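/- Let λ > 0 and let ψ be a non-constant function on V such that (λ,ψ) satisfies the Euler–Lagrange equation. Then λ = λ^G_{π,ν} if and only if ψ is monotonic (i.e. ψ(i) ≤ ψ(i+1) for all 1 ≤ i < n, or ψ(i) ≥ ψ(i+1) for all 1 ≤ i < n). -/

import Mathlib

open Finset

/-- Dirichlet form on the path with vertices `{1,…,n}`;
`ν i` denotes the weight of edge `{i, i+1}`. -/
noncomputable def EForm (n : ℕ) (ν : ℕ → ℝ) (f g : ℕ → ℝ) : ℝ :=
  ∑ i ∈ Finset.Icc 1 (n - 1), (f i - f (i + 1)) * (g i - g (i + 1)) * ν i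

/-- Mean of `f` with respect to `π` on `{1,…,n}`. -/
noncomputable def piMean (n : ℕ) (π : ℕ → ℝ) (f : ℕ → ℝ) : ℝ :=
  ∑ i ∈ Finset.Icc 1 n, f i * π i

/-- Variance of `f` with respect to `π` on `{1,…,n}`. -/
noncomputable def varPi (n : ℕ) (π : ℕ → ℝ) (f : ℕ → ℝ) : ℝ :=
  piMean n π (fun i => (f i) ^ 2) - (piMean n π f) ^ 2

/-- `f` is non-constant on `{1,…,n}`. -/
def Nonconstant (n : ℕ) (f : ℕ → ℝ) : Prop :=
  ∃ i ∈ Finset.Icc 1 n, ∃ j ∈ Finset.Icc 1 n, f i ≠ f j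

/-- `lam` is the spectral gap: the minimum of the Rayleigh quotients over
non-constant functions. -/
def IsSpectralGap (n : ℕ) (π ν : ℕ → ℝ) (lam : ℝ) : Prop :=
  IsLeast {r : ℝ | ∃ f : ℕ → ℝ, Nonconstant n f ∧ r = EForm n ν f f / varPi n π f} lam

/-- The positive-part recursion with parameter `lam`:
`ψ(i+1) = ψ(i) + max{[ψ(i)−ψ(i−1)]ν(i−1,i) − λ π(i) ψ(i), 0}/ν(i,i+1)` for `1 ≤ i < n`. -/
def PosPartRec (n : ℕ) (π ν : ℕ → ℝ) (lam : ℝ) (ψ : ℕ → ℝ) : Prop :=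
  ∀ i, 1 ≤ i → i < n →
    ψ (i + 1) = ψ i + max ((ψ i - ψ (i - 1)) * ν (i - 1) - lam * (π i * ψ i)) 0 / ν i

/-- The Euler–Lagrange equation:
`λ π(i) ψ(i) = [ψ(i)−ψ(i−1)] ν(i−1,i) + [ψ(i)−ψ(i+1)] ν(i,i+1)` for `1 ≤ i ≤ n`. -/
def EulerLagrange (n : ℕ) (π ν : ℕ → ℝ) (lam : ℝ) (ψ : ℕ → ℝ) : Prop :=
  ∀ i ∈ Finset.Icc 1 n,
    lam * (π i * ψ i) = (ψ i - ψ (i - 1)) * ν (i - 1) + (ψ i - ψ (i + 1)) * ν i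

/-!
For a probability measure `π`, covariances are double sums,
`2 Cov(f, g) = ∑ i, ∑ j, π i * π j * (f i - f j) * (g i - g j)`, and the Euler–Lagrange equation
says, after summation by parts, that `λ Cov(ψ, g) = E(ψ, g)` for every `g`.
Both implications compare a function `f` with two monotone functions `u`, `w` whose increments
multiply to the squared increments of `f`: then `E(f, f) = E(u, w)`, while Cauchy–Schwarz along the
path gives `(f i - f j)² ≤ (u i - u j) * (w i - w j)`, hence `Var f ≤ Cov(u, w)`.

* If `ψ` is nondecreasing, Chebyshev's inequality for `ψ` and indicators of upper intervals makes
  it strictly increasing. With `u = ψ` and increments of `w` equal to those of `f` squared over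
  those of `ψ`, one gets `λ Var f ≤ λ Cov(ψ, w) = E(ψ, w) = E(f, f)`.
* If `λ` is the gap, take `f = ψ` and `u = w = F` with increments `|ψ (i + 1) - ψ i|`. Then
  `F` has the energy of `ψ` and at least its variance, so by minimality the variances agree and
  `|ψ n - ψ 1| = F n - F 1`: the increments of `ψ` all have the same sign.
-/

section Increments

theorem sum_Icc_pred_sub_mul {R : Type*} [CommRing R] (e g : ℕ → R) (m : ℕ) :
    ∑ i ∈ Icc 1 (m + 1), (e (i - 1) - e i) * g i =
      ∑ i ∈ Icc 1 m, e i * (g (i + 1) - g i) + e 0 * g 1 - e (m + 1) * g (m + 1) := by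
  induction m with
  | zero => simp; ring
  | succ m ih =>
    rw [sum_Icc_succ_top (by omega), ih, sum_Icc_succ_top (by omega)]
    simp only [Nat.add_sub_cancel]
    ring

theorem monotoneOn_Icc_of_le_succ {α : Type*} [Preorder α] {f : ℕ → α} {m n : ℕ}
    (h : ∀ i, m ≤ i → i < n → f i ≤ f (i + 1)) : MonotoneOn f (Set.Icc m n) :=
  monotoneOn_of_le_add_one Set.ordConnected_Icc fun i _ hi hi' => h i hi.1 hi'.2

theorem strictMonoOn_Icc_of_lt_succ {α : Type*} [Preorder α] {f : ℕ → α} {m n : ℕ}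
    (h : ∀ i, m ≤ i → i < n → f i < f (i + 1)) : StrictMonoOn f (Set.Icc m n) :=
  strictMonoOn_of_lt_add_one Set.ordConnected_Icc fun i _ hi hi' => h i hi.1 hi'.2

theorem forall_nonneg_or_forall_nonpos_of_sum_abs_le_abs_sum {ι G : Type*} [AddCommGroup G]
    [LinearOrder G] [IsOrderedAddMonoid G] {s : Finset ι} {d : ι → G}
    (h : ∑ k ∈ s, |d k| ≤ |∑ k ∈ s, d k|) : (∀ k ∈ s, 0 ≤ d k) ∨ (∀ k ∈ s, d k ≤ 0) := by
  rcases abs_choice (∑ k ∈ s, d k) with habs | habs <;> rw [habs] at h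
  · have heq := (sum_eq_sum_iff_of_le fun k _ => le_abs_self (d k)).1
      (h.antisymm' (sum_le_sum fun k _ => le_abs_self (d k)))
    exact .inl fun k hk => abs_eq_self.1 (heq k hk).symm
  · rw [← sum_neg_distrib] at h
    have heq := (sum_eq_sum_iff_of_le fun k _ => neg_le_abs (d k)).1
      (h.antisymm' (sum_le_sum fun k _ => neg_le_abs (d k)))
    exact .inr fun k hk => abs_eq_neg_self.1 (heq k hk).symm

theorem sq_sub_le_sub_mul_sub {R : Type*} [CommRing R] [LinearOrder R] [IsStrictOrderedRing R]
    {f u w : ℕ → R} {m n : ℕ} (hu : MonotoneOn u (Set.Icc m n)) (hw : MonotoneOn w (Set.Icc m n))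
    (h : ∀ k, m ≤ k → k < n → (f (k + 1) - f k) ^ 2 ≤ (u (k + 1) - u k) * (w (k + 1) - w k))
    {i j : ℕ} (hi : i ∈ Set.Icc m n) (hj : j ∈ Set.Icc m n) :
    (f i - f j) ^ 2 ≤ (u i - u j) * (w i - w j) := by
  wlog hji : j ≤ i generalizing i j
  · calc (f i - f j) ^ 2 = (f j - f i) ^ 2 := sub_sq_comm ..
      _ ≤ (u j - u i) * (w j - w i) := this hj hi (le_of_not_ge hji)
      _ = (u i - u j) * (w i - w j) := by ring
  have hmem {k : ℕ} (hk : k ∈ Ico j i) : m ≤ k ∧ k < n := by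
    rw [mem_Ico] at hk
    exact ⟨hj.1.trans hk.1, hk.2.trans_le hi.2⟩
  have hinc {v : ℕ → R} (hv : MonotoneOn v (Set.Icc m n)) (k : ℕ) (hk : k ∈ Ico j i) :
      0 ≤ v (k + 1) - v k := by
    obtain ⟨hmk, hkn⟩ := hmem hk
    exact sub_nonneg.2 (hv ⟨hmk, hkn.le⟩ ⟨by omega, hkn⟩ k.le_succ)
  simp only [← sum_Ico_sub _ hji]
  exact sum_sq_le_sum_mul_sum_of_sq_le_mul _ (hinc hu) (hinc hw)
    fun k hk => h k (hmem hk).1 (hmem hk).2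

end Increments

section Covariance

/-- Covariance of `f` and `g` with respect to `π` on `{1,…,n}`, the polarization of `varPi`. -/
noncomputable def covPi (n : ℕ) (π f g : ℕ → ℝ) : ℝ :=
  piMean n π (fun i => f i * g i) - piMean n π f * piMean n π g

variable {n : ℕ} {π : ℕ → ℝ}

theorem covPi_self (f : ℕ → ℝ) : covPi n π f f = varPi n π f := by
  simp only [covPi, varPi, sq]

theorem two_mul_covPi (hπ1 : ∑ i ∈ Icc 1 n, π i = 1) (f g : ℕ → ℝ) :
    2 * covPi n π f g =
      ∑ i ∈ Icc 1 n, ∑ j ∈ Icc 1 n, π i * π j * ((f i - f j) * (g i - g j)) := by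
  have expand (i j : ℕ) : π i * π j * ((f i - f j) * (g i - g j)) =
      f i * g i * π i * π j - f i * π i * (g j * π j) - g i * π i * (f j * π j)
        + π i * (f j * g j * π j) := by ring
  simp only [covPi, piMean, expand, sum_add_distrib, sum_sub_distrib, ← mul_sum, ← sum_mul, hπ1]
  ring

theorem covPi_le_covPi (hπ : ∀ i ∈ Icc 1 n, 0 ≤ π i) (hπ1 : ∑ i ∈ Icc 1 n, π i = 1)
    {f g f' g' : ℕ → ℝ} (h : ∀ i ∈ Icc 1 n, ∀ j ∈ Icc 1 n,
      (f i - f j) * (g i - g j) ≤ (f' i - f' j) * (g' i - g' j)) :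
    covPi n π f g ≤ covPi n π f' g' := by
  refine le_of_mul_le_mul_left ?_ (zero_lt_two' ℝ)
  rw [two_mul_covPi hπ1, two_mul_covPi hπ1]
  exact sum_le_sum fun i hi => sum_le_sum fun j hj =>
    mul_le_mul_of_nonneg_left (h i hi j hj) (mul_nonneg (hπ i hi) (hπ j hj))

theorem covPi_lt_covPi (hπ : ∀ i ∈ Icc 1 n, 0 < π i) (hπ1 : ∑ i ∈ Icc 1 n, π i = 1)
    {f g f' g' : ℕ → ℝ} (h : ∀ i ∈ Icc 1 n, ∀ j ∈ Icc 1 n,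
      (f i - f j) * (g i - g j) ≤ (f' i - f' j) * (g' i - g' j))
    (hlt : ∃ i ∈ Icc 1 n, ∃ j ∈ Icc 1 n,
      (f i - f j) * (g i - g j) < (f' i - f' j) * (g' i - g' j)) :
    covPi n π f g < covPi n π f' g' := by
  have hle (i : ℕ) (hi : i ∈ Icc 1 n) (j : ℕ) (hj : j ∈ Icc 1 n) :=
    mul_le_mul_of_nonneg_left (h i hi j hj) (mul_pos (hπ i hi) (hπ j hj)).le
  obtain ⟨i, hi, j, hj, hij⟩ := hlt
  refine lt_of_mul_lt_mul_left ?_ (zero_le_two (α := ℝ))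
  rw [two_mul_covPi hπ1, two_mul_covPi hπ1]
  exact sum_lt_sum (fun a ha => sum_le_sum (hle a ha))
    ⟨i, hi, sum_lt_sum (hle i hi)
      ⟨j, hj, mul_lt_mul_of_pos_left hij (mul_pos (hπ i hi) (hπ j hj))⟩⟩

theorem covPi_pos_of_monovaryOn (hπ : ∀ i ∈ Icc 1 n, 0 < π i) (hπ1 : ∑ i ∈ Icc 1 n, π i = 1)
    {f g : ℕ → ℝ} (hfg : MonovaryOn f g (Set.Icc 1 n))
    (hlt : ∃ i ∈ Icc 1 n, ∃ j ∈ Icc 1 n, f i < f j ∧ g i < g j) :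
    0 < covPi n π f g := by
  have hzero : covPi n π (fun _ => 0) (fun _ => 0) = 0 := by simp [covPi, piMean]
  obtain ⟨i, hi, j, hj, hf, hg⟩ := hlt
  rw [← hzero]
  refine covPi_lt_covPi hπ hπ1 (fun a ha b hb => ?_) ⟨j, hj, i, hi, ?_⟩
  · simpa using hfg.sub_mul_sub_nonneg (mem_Icc.1 hb) (mem_Icc.1 ha)
  · simpa using mul_pos (sub_pos.2 hf) (sub_pos.2 hg)

theorem Nonconstant.varPi_pos (hπ : ∀ i ∈ Icc 1 n, 0 < π i) (hπ1 : ∑ i ∈ Icc 1 n, π i = 1)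
    {f : ℕ → ℝ} (hf : Nonconstant n f) : 0 < varPi n π f := by
  rw [← covPi_self]
  refine covPi_pos_of_monovaryOn hπ hπ1 (monovaryOn_self f _) ?_
  obtain ⟨i, hi, j, hj, hij⟩ := hf
  rcases hij.lt_or_gt with hij | hji
  · exact ⟨i, hi, j, hj, hij, hij⟩
  · exact ⟨j, hj, i, hi, hji, hji⟩

theorem varPi_le_covPi (hπ : ∀ i ∈ Icc 1 n, 0 ≤ π i) (hπ1 : ∑ i ∈ Icc 1 n, π i = 1)
    {f u w : ℕ → ℝ} (hu : MonotoneOn u (Set.Icc 1 n)) (hw : MonotoneOn w (Set.Icc 1 n))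
    (h : ∀ k, 1 ≤ k → k < n → (f (k + 1) - f k) ^ 2 ≤ (u (k + 1) - u k) * (w (k + 1) - w k)) :
    varPi n π f ≤ covPi n π u w := by
  rw [← covPi_self]
  refine covPi_le_covPi hπ hπ1 fun i hi j hj => ?_
  rw [← sq]
  exact sq_sub_le_sub_mul_sub hu hw h (mem_Icc.1 hi) (mem_Icc.1 hj)

end Covariance

section Nonconstant

variable {n : ℕ} {f : ℕ → ℝ}

theorem Nonconstant.one_le (hf : Nonconstant n f) : 1 ≤ n := by
  obtain ⟨i, hi, -⟩ := hf
  exact (mem_Icc.1 hi).1.trans (mem_Icc.1 hi).2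

theorem Nonconstant.neg (hf : Nonconstant n f) : Nonconstant n (-f) := by
  obtain ⟨i, hi, j, hj, hij⟩ := hf
  exact ⟨i, hi, j, hj, neg_injective.ne hij⟩

theorem Nonconstant.lt_of_monotoneOn (hf : Nonconstant n f) (hmono : MonotoneOn f (Set.Icc 1 n)) :
    f 1 < f n := by
  have hn := hf.one_le
  obtain ⟨i, hi, j, hj, hij⟩ := hf
  rw [mem_Icc] at hi hj
  have bounds {k : ℕ} (hk : k ∈ Set.Icc 1 n) : f 1 ≤ f k ∧ f k ≤ f n :=
    ⟨hmono ⟨le_rfl, hn⟩ hk hk.1, hmono hk ⟨hn, le_rfl⟩ hk.2⟩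
  by_contra! hle
  exact hij (by linarith [bounds hi, bounds hj])

end Nonconstant

section DirichletForm

variable {n : ℕ} {ν : ℕ → ℝ}

theorem EForm_eq_of_sq_sub_eq {f u w : ℕ → ℝ}
    (h : ∀ k, 1 ≤ k → k < n → (f (k + 1) - f k) ^ 2 = (u (k + 1) - u k) * (w (k + 1) - w k)) :
    EForm n ν f f = EForm n ν u w := by
  refine sum_congr rfl fun k hk => ?_
  rw [mem_Icc] at hk
  linear_combination ν k * h k hk.1 (by omega)

theorem EForm_indicator_Ioi (f : ℕ → ℝ) {k : ℕ} (hk : 1 ≤ k) (hkn : k < n) :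
    EForm n ν f ((Set.Ioi k).indicator 1) = (f (k + 1) - f k) * ν k := by
  rw [EForm, sum_eq_single_of_mem k (mem_Icc.2 ⟨hk, by omega⟩)]
  · simp [Set.indicator]
  · intro i _ hik
    have : k < i + 1 ↔ k < i := by omega
    simp [Set.indicator, this]

end DirichletForm

section PathVariation

/-- Total variation of `f` along the path, as a function of the endpoint. It replaces each increment
of `f` by its absolute value; the base point `0` is immaterial, as only differences are used. -/
def pathVariation (f : ℕ → ℝ) (i : ℕ) : ℝ :=
  ∑ k ∈ range i, |f (k + 1) - f k|

theorem pathVariation_succ_sub (f : ℕ → ℝ) (k : ℕ) :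
    pathVariation f (k + 1) - pathVariation f k = |f (k + 1) - f k| :=
  sum_range_succ_sub_sum _

theorem monotone_pathVariation (f : ℕ → ℝ) : Monotone (pathVariation f) :=
  monotone_nat_of_le_succ fun k =>
    sub_nonneg.1 ((abs_nonneg _).trans_eq (pathVariation_succ_sub f k).symm)

theorem sq_succ_sub_eq_pathVariation (f : ℕ → ℝ) (k : ℕ) :
    (f (k + 1) - f k) ^ 2 =
      (pathVariation f (k + 1) - pathVariation f k) *
        (pathVariation f (k + 1) - pathVariation f k) := by
  rw [pathVariation_succ_sub, abs_mul_abs_self, sq]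

theorem mul_self_sub_le_pathVariation (f : ℕ → ℝ) (i j : ℕ) :
    (f i - f j) * (f i - f j) ≤
      (pathVariation f i - pathVariation f j) * (pathVariation f i - pathVariation f j) := by
  have hmono := (monotone_pathVariation f).monotoneOn (Set.Icc 0 (max i j))
  rw [← sq]
  exact sq_sub_le_sub_mul_sub hmono hmono (fun k _ _ => (sq_succ_sub_eq_pathVariation f k).le)
    ⟨i.zero_le, le_max_left i j⟩ ⟨j.zero_le, le_max_right i j⟩

theorem Nonconstant.pathVariation {n : ℕ} {f : ℕ → ℝ} (hf : Nonconstant n f) :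
    Nonconstant n (pathVariation f) := by
  obtain ⟨i, hi, j, hj, hij⟩ := hf
  refine ⟨i, hi, j, hj, fun hV => hij (sub_eq_zero.1 (mul_self_eq_zero.1 ?_))⟩
  refine le_antisymm ?_ (mul_self_nonneg _)
  simpa [hV] using mul_self_sub_le_pathVariation f i j

theorem EForm_pathVariation {n : ℕ} {ν : ℕ → ℝ} (f : ℕ → ℝ) :
    EForm n ν (pathVariation f) (pathVariation f) = EForm n ν f f :=
  (EForm_eq_of_sq_sub_eq fun k _ _ => sq_succ_sub_eq_pathVariation f k).symm

theorem monotone_or_antitone_of_varPi_pathVariation_le {n : ℕ} {π : ℕ → ℝ}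
    (hπ : ∀ i ∈ Icc 1 n, 0 < π i) (hπ1 : ∑ i ∈ Icc 1 n, π i = 1) {f : ℕ → ℝ}
    (hvar : varPi n π (pathVariation f) ≤ varPi n π f) :
    (∀ i, 1 ≤ i → i < n → f i ≤ f (i + 1)) ∨ (∀ i, 1 ≤ i → i < n → f (i + 1) ≤ f i) := by
  obtain rfl | hn := n.eq_zero_or_pos
  · simp
  have hends : |pathVariation f n - pathVariation f 1| ≤ |f n - f 1| := by
    by_contra! hlt
    refine hvar.not_gt ?_
    rw [← covPi_self, ← covPi_self]
    exact covPi_lt_covPi hπ hπ1 (fun i _ j _ => mul_self_sub_le_pathVariation f i j)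
      ⟨n, mem_Icc.2 ⟨hn, le_rfl⟩, 1, mem_Icc.2 ⟨le_rfl, hn⟩, abs_lt_iff_mul_self_lt.1 hlt⟩
  have hsum : ∑ k ∈ Ico 1 n, |f (k + 1) - f k| ≤ |∑ k ∈ Ico 1 n, (f (k + 1) - f k)| := by
    simp only [← pathVariation_succ_sub, sum_Ico_sub _ hn]
    exact (le_abs_self _).trans hends
  simpa only [mem_Ico, and_imp, sub_nonneg, sub_nonpos] using
    forall_nonneg_or_forall_nonpos_of_sum_abs_le_abs_sum hsum

end PathVariation

section EulerLagrange

variable {n : ℕ} {π ν ψ : ℕ → ℝ} {lam : ℝ}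

theorem EulerLagrange.neg (hEL : EulerLagrange n π ν lam ψ) : EulerLagrange n π ν lam (-ψ) := by
  intro i hi
  simp only [Pi.neg_apply]
  linear_combination -hEL i hi

theorem EulerLagrange.mul_piMean_mul_eq_EForm (hν0 : ν 0 = 0) (hνn : ν n = 0)
    (hEL : EulerLagrange n π ν lam ψ) (g : ℕ → ℝ) :
    lam * piMean n π (fun i => ψ i * g i) = EForm n ν ψ g := by
  obtain _ | m := n
  · simp [piMean, EForm]
  let flux (k : ℕ) : ℝ := (ψ (k + 1) - ψ k) * ν k
  calc lam * piMean (m + 1) π (fun i => ψ i * g i)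
      = ∑ i ∈ Icc 1 (m + 1), (flux (i - 1) - flux i) * g i := by
        rw [piMean, mul_sum]
        refine sum_congr rfl fun i hi => ?_
        simp only [flux, Nat.sub_add_cancel (mem_Icc.1 hi).1]
        linear_combination g i * hEL i hi
    _ = ∑ i ∈ Icc 1 m, flux i * (g (i + 1) - g i) := by
        rw [sum_Icc_pred_sub_mul]
        simp only [flux, hν0, hνn, mul_zero, zero_mul, add_zero, sub_zero]
    _ = EForm (m + 1) ν ψ g := sum_congr rfl fun i _ => by simp only [flux]; ring

theorem EulerLagrange.mul_covPi_eq_EForm (hν0 : ν 0 = 0) (hνn : ν n = 0)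
    (hEL : EulerLagrange n π ν lam ψ) (g : ℕ → ℝ) :
    lam * covPi n π ψ g = EForm n ν ψ g := by
  have hmean : lam * piMean n π ψ = 0 := by
    simpa [EForm] using hEL.mul_piMean_mul_eq_EForm hν0 hνn 1
  rw [covPi, ← hEL.mul_piMean_mul_eq_EForm hν0 hνn g]
  linear_combination -piMean n π g * hmean

theorem EulerLagrange.strictMonoOn (hπ : ∀ i ∈ Icc 1 n, 0 < π i)
    (hπ1 : ∑ i ∈ Icc 1 n, π i = 1) (hν : ∀ i ∈ Icc 1 (n - 1), 0 < ν i)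
    (hν0 : ν 0 = 0) (hνn : ν n = 0) (hlam : 0 < lam) (hψ : Nonconstant n ψ)
    (hEL : EulerLagrange n π ν lam ψ) (hmono : MonotoneOn ψ (Set.Icc 1 n)) :
    StrictMonoOn ψ (Set.Icc 1 n) := by
  refine strictMonoOn_Icc_of_lt_succ fun k hk hkn => sub_pos.1 ?_
  let g : ℕ → ℝ := (Set.Ioi k).indicator 1
  have hg : Monotone g := by
    intro i j hij
    simp only [g, Set.indicator, Set.mem_Ioi, Pi.one_apply]
    split_ifs <;> first | omega | norm_num
  have hcov : 0 < covPi n π ψ g := by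
    refine covPi_pos_of_monovaryOn hπ hπ1 (hmono.monovaryOn (hg.monotoneOn _))
      ⟨1, mem_Icc.2 ⟨le_rfl, by omega⟩, n, mem_Icc.2 ⟨by omega, le_rfl⟩,
        hψ.lt_of_monotoneOn hmono, ?_⟩
    simp [g, hkn, hk.not_gt]
  have hflux : 0 < (ψ (k + 1) - ψ k) * ν k := by
    rw [← EForm_indicator_Ioi ψ hk hkn, ← hEL.mul_covPi_eq_EForm hν0 hνn]
    exact mul_pos hlam hcov
  exact pos_of_mul_pos_left hflux (hν k (mem_Icc.2 ⟨hk, by omega⟩)).le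

theorem EulerLagrange.mul_varPi_le_EForm (hπ : ∀ i ∈ Icc 1 n, 0 ≤ π i)
    (hπ1 : ∑ i ∈ Icc 1 n, π i = 1) (hν0 : ν 0 = 0) (hνn : ν n = 0) (hlam : 0 ≤ lam)
    (hEL : EulerLagrange n π ν lam ψ) (hψ : StrictMonoOn ψ (Set.Icc 1 n)) (f : ℕ → ℝ) :
    lam * varPi n π f ≤ EForm n ν f f := by
  let w (i : ℕ) : ℝ := ∑ k ∈ range i, (f (k + 1) - f k) ^ 2 / (ψ (k + 1) - ψ k)
  have hw (k : ℕ) : w (k + 1) - w k = (f (k + 1) - f k) ^ 2 / (ψ (k + 1) - ψ k) :=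
    sum_range_succ_sub_sum _
  have hpos (k : ℕ) (hk : 1 ≤ k) (hkn : k < n) : 0 < ψ (k + 1) - ψ k :=
    sub_pos.2 (hψ ⟨hk, hkn.le⟩ ⟨by omega, hkn⟩ k.lt_succ_self)
  have hsq (k : ℕ) (hk : 1 ≤ k) (hkn : k < n) :
      (f (k + 1) - f k) ^ 2 = (ψ (k + 1) - ψ k) * (w (k + 1) - w k) := by
    rw [hw, mul_div_cancel₀ _ (hpos k hk hkn).ne']
  have hwmono : MonotoneOn w (Set.Icc 1 n) :=
    monotoneOn_Icc_of_le_succ fun k hk hkn => sub_nonneg.1 <| by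
      rw [hw]
      exact div_nonneg (sq_nonneg _) (hpos k hk hkn).le
  calc lam * varPi n π f
      ≤ lam * covPi n π ψ w := mul_le_mul_of_nonneg_left
        (varPi_le_covPi hπ hπ1 hψ.monotoneOn hwmono fun k hk hkn => (hsq k hk hkn).le) hlam
    _ = EForm n ν ψ w := hEL.mul_covPi_eq_EForm hν0 hνn w
    _ = EForm n ν f f := (EForm_eq_of_sq_sub_eq hsq).symm

end EulerLagrange

section SpectralGap

variable {n : ℕ} {π ν ψ : ℕ → ℝ} {lam : ℝ}

theorem EulerLagrange.isSpectralGap (hπ : ∀ i ∈ Icc 1 n, 0 < π i)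
    (hπ1 : ∑ i ∈ Icc 1 n, π i = 1) (hν : ∀ i ∈ Icc 1 (n - 1), 0 < ν i)
    (hν0 : ν 0 = 0) (hνn : ν n = 0) (hlam : 0 < lam) (hψ : Nonconstant n ψ)
    (hEL : EulerLagrange n π ν lam ψ) (hmono : MonotoneOn ψ (Set.Icc 1 n)) :
    IsSpectralGap n π ν lam := by
  have hstrict := hEL.strictMonoOn hπ hπ1 hν hν0 hνn hlam hψ hmono
  refine ⟨⟨ψ, hψ, ?_⟩, ?_⟩
  · rw [← hEL.mul_covPi_eq_EForm hν0 hνn, covPi_self,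
      mul_div_cancel_right₀ _ (hψ.varPi_pos hπ hπ1).ne']
  · rintro _ ⟨f, hf, rfl⟩
    rw [le_div_iff₀ (hf.varPi_pos hπ hπ1)]
    exact hEL.mul_varPi_le_EForm (fun i hi => (hπ i hi).le) hπ1 hν0 hνn hlam.le hstrict f

theorem IsSpectralGap.mul_varPi_le_EForm (hπ : ∀ i ∈ Icc 1 n, 0 < π i)
    (hπ1 : ∑ i ∈ Icc 1 n, π i = 1) (hgap : IsSpectralGap n π ν lam)
    {f : ℕ → ℝ} (hf : Nonconstant n f) : lam * varPi n π f ≤ EForm n ν f f :=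
  (le_div_iff₀ (hf.varPi_pos hπ hπ1)).1 (hgap.2 ⟨f, hf, rfl⟩)

theorem IsSpectralGap.monotone_or_antitone (hπ : ∀ i ∈ Icc 1 n, 0 < π i)
    (hπ1 : ∑ i ∈ Icc 1 n, π i = 1) (hgap : IsSpectralGap n π ν lam) (hlam : 0 < lam)
    (hψ : Nonconstant n ψ) (hmin : EForm n ν ψ ψ = lam * varPi n π ψ) :
    (∀ i, 1 ≤ i → i < n → ψ i ≤ ψ (i + 1)) ∨ (∀ i, 1 ≤ i → i < n → ψ (i + 1) ≤ ψ i) := by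
  refine monotone_or_antitone_of_varPi_pathVariation_le hπ hπ1 (le_of_mul_le_mul_left ?_ hlam)
  calc lam * varPi n π (pathVariation ψ)
      ≤ EForm n ν (pathVariation ψ) (pathVariation ψ) :=
        hgap.mul_varPi_le_EForm hπ hπ1 hψ.pathVariation
    _ = EForm n ν ψ ψ := EForm_pathVariation ψ
    _ = lam * varPi n π ψ := hmin

end SpectralGap

theorem stmt4 (n : ℕ) (hn : 2 ≤ n) (π ν : ℕ → ℝ)
    (hπ : ∀ i ∈ Finset.Icc 1 n, 0 < π i)
    (hπ1 : ∑ i ∈ Finset.Icc 1 n, π i = 1)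
    (hν : ∀ i ∈ Finset.Icc 1 (n - 1), 0 < ν i)
    (hν0 : ν 0 = 0) (hνn : ν n = 0)
    (gap : ℝ) (hgap : IsSpectralGap n π ν gap)
    (lam : ℝ) (hlam : 0 < lam)
    (ψ : ℕ → ℝ) (hψ : Nonconstant n ψ)
    (hEL : EulerLagrange n π ν lam ψ) :
    lam = gap ↔
      ((∀ i, 1 ≤ i → i < n → ψ i ≤ ψ (i + 1)) ∨
       (∀ i, 1 ≤ i → i < n → ψ (i + 1) ≤ ψ i)) := by
  constructor
  · rintro rfl
    refine hgap.monotone_or_antitone hπ hπ1 hlam hψ ?_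
    rw [← hEL.mul_covPi_eq_EForm hν0 hνn, covPi_self]
  · rintro (hmono | hanti)
    · exact IsLeast.unique
        (hEL.isSpectralGap hπ hπ1 hν hν0 hνn hlam hψ (monotoneOn_Icc_of_le_succ hmono)) hgap
    · have hmono_neg : MonotoneOn (-ψ) (Set.Icc 1 n) :=
        monotoneOn_Icc_of_le_succ fun i hi hin => neg_le_neg (hanti i hi hin)
      exact IsLeast.unique
        (hEL.neg.isSpectralGap hπ hπ1 hν hν0 hνn hlam hψ.neg hmono_neg) hgap
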